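/- arXiv:2507.09496 — 2 statements merged into one kernel-verified Lean document; each statement's English description precedes it below -/
import Mathlib

section
/- Let a_n = √(2 log n), c_n = log(√(4π log n)), t_n(x) = x - c_n, and let Ψ(u) = 1 - Φ(u) be the standard normal tail function. Then there exist a constant C > 0 and N ∈ ℕ such that for all n ≥ N and all x ∈ [-(1/4) log log n, (log n)^{1/4}], one has Ψ(a_n + t_n(x)/a_n) = (1/n) e^{-x} (1 - (t_n(x)² + 2 t_n(x) + 2)/(4 log n)) (1 + r_n(x)) with |r_n(x)| ≤ C t_n(x)⁴/(log n)² (interpreting t_n(x)⁴/(log n)² ≥ (log n)^{-2}). -/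
open MeasureTheory Filter Real

/-- The standard normal cumulative distribution function. -/
noncomputable def stdNormalCDF (x : ℝ) : ℝ :=
  ∫ t in Set.Iic x, Real.exp (-t ^ 2 / 2) / Real.sqrt (2 * Real.pi)

/-- The standard normal density. -/
noncomputable def stdNormalPDF (x : ℝ) : ℝ :=
  Real.exp (-x ^ 2 / 2) / Real.sqrt (2 * Real.pi)

/-- Scaling constant `a_n = √(2 log n)`. -/
noncomputable def aSeq (n : ℕ) : ℝ := Real.sqrt (2 * Real.log n)

/-- Centering constant
`b_n = √(2 log n) - (log log n + log (4π)) / (2 √(2 log n))`. -/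
noncomputable def bSeq (n : ℕ) : ℝ :=
  aSeq n - (Real.log (Real.log n) + Real.log (4 * Real.pi)) / (2 * aSeq n)

/-- `c_n = log (√(4 π log n))`. -/
noncomputable def cSeq (n : ℕ) : ℝ := Real.log (Real.sqrt (4 * Real.pi * Real.log n))

/-- The CDF of `Y_n = a_n (X_{(n)} - b_n)` where `X_{(n)}` is the maximum of `n`
i.i.d. standard normal random variables: `P(Y_n ≤ x) = Φ(b_n + x/a_n)^n`. -/
noncomputable def Fmax (n : ℕ) (x : ℝ) : ℝ := stdNormalCDF (bSeq n + x / aSeq n) ^ n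

/-- The density of `Y_n = a_n (X_{(n)} - b_n)`:
`f_n(x) = n a_n⁻¹ φ(b_n + x/a_n) Φ(b_n + x/a_n)^{n-1}`. -/
noncomputable def fmax (n : ℕ) (x : ℝ) : ℝ :=
  n * (aSeq n)⁻¹ * stdNormalPDF (bSeq n + x / aSeq n) *
    stdNormalCDF (bSeq n + x / aSeq n) ^ (n - 1)

/-- The density of the standard Gumbel distribution. -/
noncomputable def gumbelPDF (x : ℝ) : ℝ := Real.exp (-x - Real.exp (-x))

/-- `1 - Φ` is the tail integral. -/
lemma one_sub_cdf (u : ℝ) :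
    1 - stdNormalCDF u = ∫ t in Set.Ioi u, stdNormalPDF t := by
  have hint : Integrable (fun t : ℝ => Real.exp (-t ^ 2 / 2) / Real.sqrt (2 * Real.pi)) := by
    have := (integrable_exp_neg_mul_sq (b := 1 / 2) (by norm_num)).div_const
      (Real.sqrt (2 * Real.pi))
    refine this.congr (Eventually.of_forall fun t => ?_)
    show _ / _ = _ / _
    congr 2
    ring
  have htot : ∫ t : ℝ, Real.exp (-t ^ 2 / 2) / Real.sqrt (2 * Real.pi) = 1 := by
    rw [integral_div]
    have h := integral_gaussian (1 / 2)
    have e : ∀ t : ℝ, Real.exp (-t ^ 2 / 2) = Real.exp (-(1 / 2) * t ^ 2) := fun t => by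
      congr 1; ring
    simp_rw [e]
    rw [h, show Real.pi / (1 / 2) = 2 * Real.pi by ring]
    exact div_self (by positivity)
  have h := intervalIntegral.integral_Iic_add_Ioi (b := u) hint.integrableOn hint.integrableOn
  rw [htot] at h
  unfold stdNormalCDF stdNormalPDF
  linarith

lemma pdf_pos (t : ℝ) : 0 < stdNormalPDF t := by
  unfold stdNormalPDF; positivity

lemma pdf_hasDerivAt (t : ℝ) : HasDerivAt stdNormalPDF (-t * stdNormalPDF t) t := by
  unfold stdNormalPDF
  have h : HasDerivAt (fun x : ℝ => -x ^ 2 / 2) (-t) t := by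
    have := ((hasDerivAt_pow 2 t).neg).div_const 2
    refine this.congr_deriv ?_
    norm_num
    ring
  have := (h.exp).div_const (Real.sqrt (2 * Real.pi))
  refine this.congr_deriv ?_
  ring

lemma pdf_integrableOn (u : ℝ) : IntegrableOn stdNormalPDF (Set.Ioi u) := by
  have := (integrable_exp_neg_mul_sq (b := 1 / 2) (by norm_num)).div_const
    (Real.sqrt (2 * Real.pi))
  refine (this.congr (Eventually.of_forall fun t => ?_)).integrableOn
  simp only [stdNormalPDF]
  congr 2
  ring

lemma pdf_tendsto : Tendsto stdNormalPDF atTop (nhds 0) := by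
  unfold stdNormalPDF
  have h : Tendsto (fun x : ℝ => -x ^ 2 / 2) atTop atBot := by
    have h1 : Tendsto (fun x : ℝ => x ^ 2) atTop atTop := tendsto_pow_atTop (by norm_num)
    have := (tendsto_neg_atTop_atBot.comp h1).atBot_div_const (r := 2) (by norm_num)
    exact this
  have := (Real.tendsto_exp_atBot.comp h).div_const (Real.sqrt (2 * Real.pi))
  simpa using this

lemma mills_lower (u : ℝ) (hu : 2 ≤ u) :
    stdNormalPDF u * (1 / u - 1 / u ^ 3) ≤ 1 - stdNormalCDF u := by
  rw [one_sub_cdf]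
  set g : ℝ → ℝ := fun t => -(stdNormalPDF t * (t⁻¹ - (t ^ 3)⁻¹)) with hg
  set g' : ℝ → ℝ := fun t => stdNormalPDF t * (1 - 3 / t ^ 4) with hg'
  have hd : ∀ t ∈ Set.Ici u, HasDerivAt g (g' t) t := by
    intro t ht
    have ht : u ≤ t := ht
    have h0 : t ≠ 0 := by linarith
    have := ((pdf_hasDerivAt t).mul ((hasDerivAt_inv h0).sub
      ((hasDerivAt_pow 3 t).inv (pow_ne_zero 3 h0)))).neg
    refine this.congr_deriv ?_
    simp only [hg', Pi.sub_apply, Pi.inv_apply]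
    field_simp
    push_cast
    ring
  have hlim : Tendsto g atTop (nhds 0) := by
    have h1 : Tendsto (fun t : ℝ => (t ^ 3)⁻¹) atTop (nhds 0) :=
      tendsto_inv_atTop_zero.comp (tendsto_pow_atTop (by norm_num))
    have := (pdf_tendsto.mul (tendsto_inv_atTop_zero.sub h1)).neg
    simpa using this
  have hpos : ∀ t ∈ Set.Ioi u, 0 ≤ g' t := by
    intro t ht
    have ht : u < t := ht
    have ht0 : 0 < t := by linarith
    have : 3 / t ^ 4 ≤ 1 := by
      rw [div_le_one (by positivity)]
      have : (2:ℝ) ^ 4 ≤ t ^ 4 := by gcongr; linarith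
      linarith
    exact mul_nonneg (pdf_pos t).le (by linarith)
  have hI := integral_Ioi_of_hasDerivAt_of_nonneg' hd hpos hlim
  have hint := integrableOn_Ioi_deriv_of_nonneg' hd hpos hlim
  have : ∫ t in Set.Ioi u, g' t ≤ ∫ t in Set.Ioi u, stdNormalPDF t := by
    refine setIntegral_mono_on hint (pdf_integrableOn u) measurableSet_Ioi fun t ht => ?_
    have : 0 ≤ 3 / t ^ 4 := by positivity
    have := pdf_pos t
    simp only [hg']
    nlinarith
  rw [hI] at this
  simp only [hg] at this
  simp only [one_div]
  linarith

lemma mills_upper (u : ℝ) (hu : 2 ≤ u) :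
    1 - stdNormalCDF u ≤ stdNormalPDF u * (1 / u - 1 / u ^ 3 + 3 / u ^ 5) := by
  rw [one_sub_cdf]
  set g : ℝ → ℝ := fun t => -(stdNormalPDF t * (t⁻¹ - (t ^ 3)⁻¹ + 3 * (t ^ 5)⁻¹)) with hg
  set g' : ℝ → ℝ := fun t => stdNormalPDF t * (1 + 15 / t ^ 6) with hg'
  have hd : ∀ t ∈ Set.Ici u, HasDerivAt g (g' t) t := by
    intro t ht
    have ht : u ≤ t := ht
    have h0 : t ≠ 0 := by linarith
    have := ((pdf_hasDerivAt t).mul (((hasDerivAt_inv h0).sub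
      ((hasDerivAt_pow 3 t).inv (pow_ne_zero 3 h0))).add
      (((hasDerivAt_pow 5 t).inv (pow_ne_zero 5 h0)).const_mul 3))).neg
    refine this.congr_deriv ?_
    simp only [hg', Pi.add_apply, Pi.sub_apply, Pi.inv_apply]
    field_simp
    push_cast
    ring
  have hlim : Tendsto g atTop (nhds 0) := by
    have h1 : Tendsto (fun t : ℝ => (t ^ 3)⁻¹) atTop (nhds 0) :=
      tendsto_inv_atTop_zero.comp (tendsto_pow_atTop (by norm_num))
    have h2 : Tendsto (fun t : ℝ => (t ^ 5)⁻¹) atTop (nhds 0) :=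
      tendsto_inv_atTop_zero.comp (tendsto_pow_atTop (by norm_num))
    have := (pdf_tendsto.mul ((tendsto_inv_atTop_zero.sub h1).add (h2.const_mul 3))).neg
    simpa using this
  have hpos : ∀ t ∈ Set.Ioi u, 0 ≤ g' t := by
    intro t ht
    exact mul_nonneg (pdf_pos t).le (by positivity)
  have hI := integral_Ioi_of_hasDerivAt_of_nonneg' hd hpos hlim
  have hint := integrableOn_Ioi_deriv_of_nonneg' hd hpos hlim
  have : ∫ t in Set.Ioi u, stdNormalPDF t ≤ ∫ t in Set.Ioi u, g' t := by
    refine setIntegral_mono_on (pdf_integrableOn u) hint measurableSet_Ioi fun t ht => ?_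
    have : 0 ≤ 15 / t ^ 6 := by positivity
    have := pdf_pos t
    simp only [hg']
    nlinarith
  rw [hI] at this
  simp only [hg] at this
  simp only [one_div]
  have e : 3 / u ^ 5 = 3 * (u ^ 5)⁻¹ := by ring
  rw [e]
  linarith

set_option maxHeartbeats 1000000 in
/-- The algebraic core. -/
lemma core_bound (s T w : ℝ) (hs : 0 < s) (hs1 : s ≤ 1 / 16) (hsT : s * T ^ 2 ≤ 1 / 16)
    (hw1 : 1 - s * ((1 + T * s)⁻¹) ^ 2 ≤ w)
    (hw2 : w ≤ 1 - s * ((1 + T * s)⁻¹) ^ 2 + 3 * s ^ 2 * ((1 + T * s)⁻¹) ^ 4) :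
    |Real.exp (-(s * T ^ 2 / 2)) * (1 + T * s)⁻¹ * w - (1 - s * T ^ 2 / 2 - T * s - s)|
      ≤ 200 * (s ^ 2 * max (T ^ 4) 1) := by
  set M := max (T ^ 4) 1 with hM
  have hM1 : 1 ≤ M := le_max_right _ _
  have hM4 : T ^ 4 ≤ M := le_max_left _ _
  have hM2 : T ^ 2 ≤ M := by nlinarith [sq_nonneg (T ^ 2 - 1)]
  have hMa : |T| ≤ M := by
    have := sq_abs T
    nlinarith [sq_nonneg (|T| - 1)]
  have hM3 : |T| ^ 3 ≤ M := by
    have h4 : |T| ^ 4 = T ^ 4 := by rw [← abs_pow, abs_of_nonneg (by positivity)]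
    have h2 := sq_abs T
    have : |T| ^ 3 ≤ (|T| ^ 4 + |T| ^ 2) / 2 := by nlinarith [mul_nonneg (sq_nonneg |T|) (sq_nonneg (|T| - 1))]
    linarith
  set E := s ^ 2 * M with hE
  have hss : 0 < s ^ 2 := by positivity
  have hE1 : s ^ 2 ≤ E := by nlinarith
  have hE4 : s ^ 2 * T ^ 4 ≤ E := mul_le_mul_of_nonneg_left hM4 hss.le
  have hE2 : s ^ 2 * T ^ 2 ≤ E := mul_le_mul_of_nonneg_left hM2 hss.le
  have hEa : s ^ 2 * |T| ≤ E := mul_le_mul_of_nonneg_left hMa hss.le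
  have hE3 : s ^ 2 * |T| ^ 3 ≤ E := mul_le_mul_of_nonneg_left hM3 hss.le
  have hE0 : 0 < E := by linarith
  clear_value E M
  set z := s * T ^ 2 / 2 with hz
  set y := T * s with hy
  have hz0 : 0 ≤ z := by positivity
  have hz1 : z ≤ 1 / 32 := by linarith
  have hy2 : y ^ 2 ≤ (1 / 16) ^ 2 := by
    have : y ^ 2 = s * (s * T ^ 2) := by rw [hy]; ring
    rw [this]
    have := mul_le_mul hs1 hsT (by positivity) (by norm_num)
    linarith
  have hya : |y| ≤ 1 / 16 := abs_le_of_sq_le_sq hy2 (by norm_num)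
  obtain ⟨hyl, hyu⟩ := abs_le.1 hya
  have hyabs : |y| = |T| * s := by rw [hy, abs_mul, abs_of_pos hs]
  set p := (1 + y)⁻¹ with hp
  have h1y : 0 < 1 + y := by linarith
  have hpy : p * (1 + y) = 1 := inv_mul_cancel₀ h1y.ne'
  have hp0 : 0 < p := by positivity
  have hp1 : p ≤ 16 / 15 := by nlinarith
  have hp2 : p ^ 2 ≤ 2 := by nlinarith
  have hp4 : p ^ 4 ≤ 4 := by nlinarith [sq_nonneg p]
  clear_value p y z
  have he1 : |Real.exp (-z) - (1 - z)| ≤ E := by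
    have := Real.abs_exp_sub_one_sub_id_le (x := -z) (by rw [abs_neg, abs_of_nonneg hz0]; linarith)
    have e : Real.exp (-z) - (1 - z) = Real.exp (-z) - 1 - -z := by ring
    rw [e]
    have : (-z) ^ 2 = s ^ 2 * T ^ 4 / 4 := by rw [hz]; ring
    linarith
  have he2 : |p - (1 - y)| ≤ 2 * E := by
    have e : p - (1 - y) = y ^ 2 * p := by linear_combination (1 - y) * hpy
    have e2 : y ^ 2 = s ^ 2 * T ^ 2 := by rw [hy]; ring
    rw [e, abs_of_nonneg (by positivity)]
    have := mul_le_mul (e2.trans_le hE2) (by linarith : p ≤ 2) hp0.le hE0.le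
    linarith
  have he3 : |w - (1 - s)| ≤ 20 * E := by
    have e : 1 - p ^ 2 = y * (2 + y) * p ^ 2 := by linear_combination (-1 - p * (1 + y)) * hpy
    have hb : |s * (1 - p ^ 2)| ≤ 6 * E := by
      rw [e, abs_mul, abs_mul, abs_mul, abs_of_pos hs, abs_of_pos (by linarith : 0 < 2 + y),
        abs_of_nonneg (sq_nonneg p)]
      have h1 : s * |y| ≤ E := by rw [hyabs]; linarith
      have h0 : 0 ≤ s * |y| := by positivity
      have h2 : (2 + y) * p ^ 2 ≤ 6 := by
        have := mul_le_mul (by linarith : 2 + y ≤ 3) hp2 (sq_nonneg p) (by norm_num)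
        linarith
      calc s * (|y| * (2 + y) * p ^ 2) = (s * |y|) * ((2 + y) * p ^ 2) := by ring
        _ ≤ E * 6 := mul_le_mul h1 h2 (mul_nonneg (by linarith) (sq_nonneg p)) hE0.le
        _ = 6 * E := by ring
    have h3 : 3 * s ^ 2 * p ^ 4 ≤ 12 * E := by
      have := mul_le_mul hE1 hp4 (by positivity) hE0.le
      linarith
    obtain ⟨hb1, hb2⟩ := abs_le.1 hb
    rw [abs_le]
    constructor <;> linarith
  have hex : Real.exp (-z) ≤ 1 := Real.exp_le_one_iff.2 (by linarith)
  have hw : |w| ≤ 2 := by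
    have : s ^ 2 * p ^ 4 ≤ (1 / 16) ^ 2 * 4 := by gcongr
    have : s * p ^ 2 ≤ 1 / 16 * 2 := by gcongr
    have : 0 ≤ s * p ^ 2 := by positivity
    rw [abs_le]
    constructor <;> linarith
  have hmain : Real.exp (-z) * p * w - (1 - z - y - s)
      = (Real.exp (-z) - (1 - z)) * p * w + (1 - z) * (p - (1 - y)) * w
        + (1 - z) * (1 - y) * (w - (1 - s)) + (z * y + z * s + y * s - z * y * s) := by ring
  rw [hmain]
  have b1 : |(Real.exp (-z) - (1 - z)) * p * w| ≤ E * 2 * 2 := by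
    rw [abs_mul, abs_mul, abs_of_pos hp0]
    gcongr
    linarith
  have b2 : |(1 - z) * (p - (1 - y)) * w| ≤ 1 * (2 * E) * 2 := by
    rw [abs_mul, abs_mul, abs_of_pos (by linarith : 0 < 1 - z)]
    gcongr
    linarith
  have b3 : |(1 - z) * (1 - y) * (w - (1 - s))| ≤ 1 * 2 * (20 * E) := by
    rw [abs_mul, abs_mul, abs_of_pos (by linarith : 0 < 1 - z),
      abs_of_pos (by linarith : 0 < 1 - y)]
    gcongr <;> linarith
  have c1 : |z * y| ≤ E := by
    rw [abs_mul, hyabs, abs_of_nonneg hz0, hz]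
    have : s * T ^ 2 / 2 * (|T| * s) = s ^ 2 * |T| ^ 3 / 2 := by
      rw [← sq_abs T]; ring
    rw [this]; linarith
  have c2 : |z * s| ≤ E := by
    rw [abs_mul, abs_of_nonneg hz0, abs_of_pos hs, hz]
    have : s * T ^ 2 / 2 * s = s ^ 2 * T ^ 2 / 2 := by ring
    rw [this]; linarith
  have c3 : |y * s| ≤ E := by
    rw [abs_mul, hyabs, abs_of_pos hs]
    linarith
  have c4 : |z * y * s| ≤ E := by
    rw [abs_mul, abs_of_pos hs]
    have := mul_le_mul c1 (by linarith : s ≤ 1) hs.le hE0.le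
    linarith
  rw [abs_le] at b1 b2 b3 c1 c2 c3 c4 ⊢
  constructor <;> linarith [b1.1, b1.2]

/-- The bound in terms of `L = log n`. -/
lemma psi_pointwise (n : ℕ) (x : ℝ) (hL : 8 ≤ Real.log n)
    (hT : (x - cSeq n) ^ 2 ≤ Real.log n / 8) :
    ∃ r : ℝ,
      1 - stdNormalCDF (aSeq n + (x - cSeq n) / aSeq n) =
        (1 / n) * Real.exp (-x) *
          (1 - ((x - cSeq n) ^ 2 + 2 * (x - cSeq n) + 2) / (4 * Real.log n)) *
          (1 + r) ∧
      |r| ≤ 100 * max ((x - cSeq n) ^ 4 / (Real.log n) ^ 2) ((Real.log n) ^ 2)⁻¹ := by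
  set L := Real.log n with hLdef
  set T := x - cSeq n with hTdef
  have hLpos : 0 < L := by linarith
  have hn : (0:ℝ) < n := by
    rcases Nat.eq_zero_or_pos n with h | h
    · subst h; simp at hLdef; linarith
    · exact_mod_cast h
  set a := aSeq n with ha
  have ha2 : a ^ 2 = 2 * L := by rw [ha, aSeq, Real.sq_sqrt]; positivity
  have hapos : 0 < a := by rw [ha, aSeq]; positivity
  have ha4 : 4 ≤ a := by nlinarith
  set s := 1 / (2 * L) with hs
  have hspos : 0 < s := by positivity
  have hsL : s * L = 1 / 2 := by rw [hs]; field_simp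
  have hsa : s * a ^ 2 = 1 := by rw [ha2]; linarith
  have hs1 : s ≤ 1 / 16 := by nlinarith
  have hsT : s * T ^ 2 ≤ 1 / 16 := by nlinarith
  have hya : |T * s| ≤ 1 / 16 := by
    apply abs_le_of_sq_le_sq _ (by norm_num)
    have e : (T * s) ^ 2 = s * (s * T ^ 2) := by ring
    rw [e]
    have := mul_le_mul hs1 hsT (by positivity) (by norm_num)
    linarith
  obtain ⟨hyl, hyu⟩ := abs_le.1 hya
  set u := a + T / a with hu
  have hu' : u = a * (1 + T * s) := by
    have : T / a = a * (T * s) := by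
      rw [div_eq_iff hapos.ne']; linear_combination -T * hsa
    rw [hu, this]; ring
  have h1y : 0 < 1 + T * s := by linarith
  have hu2 : 2 ≤ u := by rw [hu']; nlinarith
  have hupos : 0 < u := by linarith
  set p := (1 + T * s)⁻¹ with hp
  have hiu : u⁻¹ ^ 2 = s * p ^ 2 := by
    rw [hu', mul_inv, mul_pow, ← hp]
    congr 1
    rw [inv_pow]
    exact (eq_inv_of_mul_eq_one_left hsa).symm
  have hfu : stdNormalPDF u * u⁻¹ = (1 / n) * Real.exp (-x) * (Real.exp (-(s * T ^ 2 / 2)) * p) := by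
    have hc : Real.exp (cSeq n) = Real.sqrt (2 * Real.pi) * a := by
      rw [cSeq, Real.exp_log (by positivity), ha, aSeq, ← Real.sqrt_mul (by positivity)]
      congr 1; ring
    have hexp : Real.exp (-u ^ 2 / 2)
        = (1 / n) * Real.exp (-x) * Real.exp (cSeq n) * Real.exp (-(s * T ^ 2 / 2)) := by
      have h1 : (1:ℝ) / n = Real.exp (-L) := by
        rw [Real.exp_neg, hLdef, Real.exp_log hn, one_div]
      rw [h1, ← Real.exp_add, ← Real.exp_add, ← Real.exp_add]
      congr 1
      have hx : x = T + cSeq n := by rw [hTdef]; ring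
      rw [hx, hu']
      linear_combination (-1 / 2) * ha2 - (T + s * T ^ 2 / 2) * hsa
    unfold stdNormalPDF
    rw [hexp, hc, hu', mul_inv, ← hp]
    have : Real.sqrt (2 * Real.pi) ≠ 0 := by positivity
    field_simp
  set A := (1 / n) * Real.exp (-x) with hA
  have hApos : 0 < A := by positivity
  set q := Real.exp (-(s * T ^ 2 / 2)) * p with hq
  have hqpos : 0 < q := by positivity
  set P := 1 - stdNormalCDF u with hP
  set w := P / (A * q) with hw
  have hPw : P = A * q * w := by rw [hw]; field_simp
  have hlow := mills_lower u hu2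
  have hupp := mills_upper u hu2
  have el : stdNormalPDF u * (1 / u - 1 / u ^ 3) = A * q * (1 - s * p ^ 2) := by
    rw [← hfu, ← hiu]; field_simp
  have eu : stdNormalPDF u * (1 / u - 1 / u ^ 3 + 3 / u ^ 5)
      = A * q * (1 - s * p ^ 2 + 3 * s ^ 2 * p ^ 4) := by
    have : 3 * s ^ 2 * p ^ 4 = 3 * (s * p ^ 2) ^ 2 := by ring
    rw [this, ← hfu, ← hiu]; field_simp
  have hAq : 0 < A * q := by positivity
  rw [el, ← hP, hPw] at hlow
  rw [eu, ← hP, hPw] at hupp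
  have hcore := core_bound s T w hspos hs1 hsT (le_of_mul_le_mul_left hlow hAq)
    (le_of_mul_le_mul_left hupp hAq)
  rw [← hp, ← hq] at hcore
  have hDeq : 1 - (T ^ 2 + 2 * T + 2) / (4 * L) = 1 - s * T ^ 2 / 2 - T * s - s := by
    rw [hs]; field_simp; ring
  rw [hDeq]
  set D := 1 - s * T ^ 2 / 2 - T * s - s with hD
  have hDhalf : 1 / 2 ≤ D := by rw [hD]; linarith
  have hDpos : 0 < D := by linarith
  refine ⟨(q * w - D) / D, ?_, ?_⟩
  · rw [hPw]; field_simp; ring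
  · have hmax : max (T ^ 4 / L ^ 2) (L ^ 2)⁻¹ = 4 * (s ^ 2 * max (T ^ 4) 1) := by
      have e : max (T ^ 4 / L ^ 2) (L ^ 2)⁻¹ = max (T ^ 4) 1 / L ^ 2 := by
        rw [← max_div_div_right (by positivity), one_div]
      rw [e, hs]; field_simp; norm_num
    rw [hmax, abs_div, abs_of_pos hDpos, div_le_iff₀ hDpos]
    have : 0 ≤ s ^ 2 * max (T ^ 4) 1 := by positivity
    have h2 := mul_le_mul_of_nonneg_left hDhalf this
    linarith

lemma eventually_range : ∀ᶠ L : ℝ in atTop, 8 ≤ L ∧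
    L ^ ((1:ℝ) / 4) + Real.log L + Real.log (4 * Real.pi) ≤ (1 / 4) * L ^ ((1:ℝ) / 2) := by
  have h1 := (tendsto_rpow_atTop (show (0:ℝ) < 1/4 by norm_num)).eventually_ge_atTop 12
  have h2 := (isLittleO_log_rpow_atTop (show (0:ℝ) < 1/2 by norm_num)).bound
    (show (0:ℝ) < 1 / 12 by norm_num)
  have h3 := (tendsto_rpow_atTop (show (0:ℝ) < 1/2 by norm_num)).eventually_ge_atTop
    (12 * Real.log (4 * Real.pi))
  filter_upwards [h1, h2, h3, eventually_ge_atTop 8] with L h1 h2 h3 h4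
  refine ⟨h4, ?_⟩
  have h5 : 0 ≤ L ^ ((1:ℝ) / 2) := by positivity
  rw [Real.norm_of_nonneg h5] at h2
  have e : L ^ ((1:ℝ) / 2) = L ^ ((1:ℝ) / 4) * L ^ ((1:ℝ) / 4) := by
    rw [← Real.rpow_add (by linarith)]; norm_num
  have : 12 * L ^ ((1:ℝ) / 4) ≤ L ^ ((1:ℝ) / 2) := by
    rw [e]; gcongr
  have := le_trans (Real.le_norm_self _) h2
  linarith

/-- Precise asymptotics of the Gaussian tail `Ψ(a_n + t_n(x)/a_n)` uniformly on
`x ∈ [-(1/4) log log n, (log n)^{1/4}]`, with relative error `O(t_n(x)⁴/(log n)²)`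
(the error term being interpreted as at least `(log n)⁻²`). -/
theorem psi_asymptotic :
    ∃ C > (0 : ℝ), ∃ N : ℕ, ∀ n ≥ N,
      ∀ x ∈ Set.Icc (-(1 / 4) * Real.log (Real.log n)) ((Real.log n) ^ ((1 : ℝ) / 4)),
        ∃ r : ℝ,
          1 - stdNormalCDF (aSeq n + (x - cSeq n) / aSeq n) =
            (1 / n) * Real.exp (-x) *
              (1 - ((x - cSeq n) ^ 2 + 2 * (x - cSeq n) + 2) / (4 * Real.log n)) *
              (1 + r) ∧
          |r| ≤ C * max ((x - cSeq n) ^ 4 / (Real.log n) ^ 2) ((Real.log n) ^ 2)⁻¹ := by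
  have ht : Tendsto (fun n : ℕ => Real.log n) atTop atTop :=
    Real.tendsto_log_atTop.comp tendsto_natCast_atTop_atTop
  obtain ⟨N, hN⟩ := eventually_atTop.1 (ht.eventually eventually_range)
  refine ⟨100, by norm_num, N, fun n hn x hx => ?_⟩
  obtain ⟨h8, hb⟩ := hN n hn
  refine psi_pointwise n x h8 ?_
  obtain ⟨hx1, hx2⟩ := hx
  set L := Real.log n
  have hLpos : 0 < L := by linarith
  have hpi : 1 ≤ 4 * Real.pi := by linarith [Real.pi_gt_three]
  have hc : cSeq n = (Real.log (4 * Real.pi) + Real.log L) / 2 := by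
    rw [cSeq, Real.log_sqrt (by positivity), Real.log_mul (by positivity) hLpos.ne']
  have hl1 : 0 ≤ Real.log (4 * Real.pi) := Real.log_nonneg hpi
  have hl2 : 0 ≤ Real.log L := Real.log_nonneg (by linarith)
  have hr : 0 ≤ L ^ ((1:ℝ) / 4) := by positivity
  have habs : |x - cSeq n| ≤ (1 / 4) * L ^ ((1:ℝ) / 2) := by
    rw [abs_le, hc]
    constructor <;> linarith
  have hsq : (L ^ ((1:ℝ) / 2)) ^ 2 = L := by
    rw [← Real.sqrt_eq_rpow, Real.sq_sqrt hLpos.le]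
  have := pow_le_pow_left₀ (abs_nonneg _) habs 2
  rw [sq_abs, mul_pow, hsq] at this
  linarith
end

section
/- Let (X_i)_{i≥1} be i.i.d. standard normal and X_{(n)} = max_{1≤i≤n} X_i. Let b_n > 0 satisfy 2π b_n² exp(b_n²) = n². Then, as n → ∞, sup_{x∈ℝ} |P(X_{(n)} ≤ b_n + x/b_n) - exp(-e^{-x})| = (d₁/(4 log n))(1 + o(1)), where d₁ = sup_{x∈ℝ} (x² + 2x + 2) exp(-e^{-x}) e^{-x}. -/
open MeasureTheory Filter Real

/-- The rescaled Gaussian tail. -/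
noncomputable def hbTau (B x : ℝ) : ℝ := ∫ t in Set.Ioi x, Real.exp (-t - t ^ 2 / (2 * B))

lemma hb_int_exp (x : ℝ) : IntegrableOn (fun t : ℝ => Real.exp (-t)) (Set.Ioi x) :=
  integrableOn_exp_neg_Ioi x

lemma hb_tend (n : ℕ) : Tendsto (fun t : ℝ => t ^ n * Real.exp (-t)) atTop (nhds 0) :=
  tendsto_pow_mul_exp_neg_atTop_nhds_zero n

lemma hb_two (x : ℝ) : IntegrableOn (fun t : ℝ => t ^ 2 * Real.exp (-t)) (Set.Ioi x) ∧
    ∫ t in Set.Ioi x, t ^ 2 * Real.exp (-t) = (x ^ 2 + 2 * x + 2) * Real.exp (-x) := by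
  have hd : ∀ t ∈ Set.Ici x, HasDerivAt
      (fun t : ℝ => -((t ^ 2 + 2 * t + 2) * Real.exp (-t))) (t ^ 2 * Real.exp (-t)) t := by
    intro t _
    have h1 : HasDerivAt (fun t : ℝ => Real.exp (-t)) (-Real.exp (-t)) t := by
      simpa using (hasDerivAt_neg t).exp
    have h2 : HasDerivAt (fun t : ℝ => t ^ 2 + 2 * t + 2) (2 * t + 2) t := by
      simpa using ((hasDerivAt_pow 2 t).add ((hasDerivAt_id t).const_mul 2)).add_const 2
    refine (h2.mul h1).neg.congr_deriv ?_
    ring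
  have hl : Tendsto (fun t : ℝ => -((t ^ 2 + 2 * t + 2) * Real.exp (-t))) atTop (nhds 0) := by
    have := (((hb_tend 2).add ((hb_tend 1).const_mul 2)).add ((hb_tend 0).const_mul 2)).neg
    simp only [mul_zero, add_zero, neg_zero] at this
    refine this.congr fun t => ?_
    ring
  have hp : ∀ t ∈ Set.Ioi x, 0 ≤ t ^ 2 * Real.exp (-t) := fun t _ => by positivity
  have hi := integrableOn_Ioi_deriv_of_nonneg' hd hp hl
  refine ⟨hi, ?_⟩
  rw [integral_Ioi_of_hasDerivAt_of_tendsto' hd hi hl]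
  ring

lemma hb_four (x : ℝ) : IntegrableOn (fun t : ℝ => t ^ 4 * Real.exp (-t)) (Set.Ioi x) := by
  have hd : ∀ t ∈ Set.Ici x, HasDerivAt
      (fun t : ℝ => -((t ^ 4 + 4 * t ^ 3 + 12 * t ^ 2 + 24 * t + 24) * Real.exp (-t)))
      (t ^ 4 * Real.exp (-t)) t := by
    intro t _
    have h1 : HasDerivAt (fun t : ℝ => Real.exp (-t)) (-Real.exp (-t)) t := by
      simpa using (hasDerivAt_neg t).exp
    have h2 : HasDerivAt (fun t : ℝ => t ^ 4 + 4 * t ^ 3 + 12 * t ^ 2 + 24 * t + 24)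
        (4 * t ^ 3 + 4 * (3 * t ^ 2) + 12 * (2 * t) + 24) t := by
      simpa using ((((hasDerivAt_pow 4 t).add ((hasDerivAt_pow 3 t).const_mul 4)).add
        ((hasDerivAt_pow 2 t).const_mul 12)).add ((hasDerivAt_id t).const_mul 24)).add_const 24
    refine (h2.mul h1).neg.congr_deriv ?_
    ring
  have hl : Tendsto (fun t : ℝ =>
      -((t ^ 4 + 4 * t ^ 3 + 12 * t ^ 2 + 24 * t + 24) * Real.exp (-t))) atTop (nhds 0) := by
    have := (((((hb_tend 4).add ((hb_tend 3).const_mul 4)).add ((hb_tend 2).const_mul 12)).add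
      ((hb_tend 1).const_mul 24)).add ((hb_tend 0).const_mul 24)).neg
    simp only [mul_zero, add_zero, neg_zero] at this
    refine this.congr fun t => ?_
    ring
  exact integrableOn_Ioi_deriv_of_nonneg' hd (fun t _ => by positivity) hl

lemma hb_tau_int {B : ℝ} (hB : 0 < B) (x : ℝ) :
    IntegrableOn (fun t : ℝ => Real.exp (-t - t ^ 2 / (2 * B))) (Set.Ioi x) := by
  refine Integrable.mono' (hb_int_exp x) (by fun_prop) ?_
  refine ae_of_all _ fun t => ?_
  rw [Real.norm_eq_abs, abs_of_pos (Real.exp_pos _)]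
  apply Real.exp_le_exp.2
  have : 0 ≤ t ^ 2 / (2 * B) := by positivity
  linarith

lemma hb_tau_nonneg (B x : ℝ) : 0 ≤ hbTau B x :=
  integral_nonneg fun t => (Real.exp_pos _).le

lemma hb_tau_anti {B : ℝ} (hB : 0 < B) {x y : ℝ} (h : x ≤ y) : hbTau B y ≤ hbTau B x :=
  setIntegral_mono_set (hb_tau_int hB x) (ae_of_all _ fun t => (Real.exp_pos _).le)
    (Set.Ioi_subset_Ioi h).eventuallyLE

lemma hb_tau_le {B : ℝ} (hB : 0 < B) (x : ℝ) : hbTau B x ≤ Real.exp (-x) := by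
  rw [← integral_exp_neg_Ioi x]
  refine integral_mono (hb_tau_int hB x) (hb_int_exp x) fun t => ?_
  apply Real.exp_le_exp.2
  have : 0 ≤ t ^ 2 / (2 * B) := by positivity
  linarith

lemma hb_delta_le {B : ℝ} (hB : 0 < B) (x : ℝ) :
    Real.exp (-x) - hbTau B x ≤ (x ^ 2 + 2 * x + 2) * Real.exp (-x) / (2 * B) := by
  rw [← (hb_two x).2, ← integral_exp_neg_Ioi x, hbTau,
    ← integral_sub (hb_int_exp x) (hb_tau_int hB x), ← integral_div]
  refine integral_mono ((hb_int_exp x).sub (hb_tau_int hB x)) ((hb_two x).1.div_const _)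
    fun t => ?_
  have h := Real.add_one_le_exp (-(t ^ 2 / (2 * B)))
  have e : Real.exp (-t - t ^ 2 / (2 * B)) = Real.exp (-t) * Real.exp (-(t ^ 2 / (2 * B))) := by
    rw [← Real.exp_add]; ring_nf
  have := mul_le_mul_of_nonneg_left h (Real.exp_pos (-t)).le
  simp only [Pi.sub_apply]
  rw [e]
  have e2 : t ^ 2 * Real.exp (-t) / (2 * B) = Real.exp (-t) * (t ^ 2 / (2 * B)) := by ring
  rw [e2]
  linarith

lemma hb_exp_quad {s : ℝ} (hs : 0 ≤ s) : Real.exp (-s) ≤ 1 - s + s ^ 2 / 2 := by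
  have h := Real.quadratic_le_exp_of_nonneg hs
  have h1 : 0 < 1 + s + s ^ 2 / 2 := by positivity
  rw [Real.exp_neg]
  refine (inv_anti₀ h1 h).trans ?_
  rw [inv_le_iff_one_le_mul₀ h1]
  nlinarith [sq_nonneg (s ^ 2)]

lemma hb_delta_ge {B : ℝ} (hB : 0 < B) (x : ℝ) :
    (x ^ 2 + 2 * x + 2) * Real.exp (-x) / (2 * B)
      - (∫ t in Set.Ioi x, t ^ 4 * Real.exp (-t)) / (8 * B ^ 2) ≤ Real.exp (-x) - hbTau B x := by
  rw [← (hb_two x).2, ← integral_exp_neg_Ioi x, hbTau,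
    ← integral_sub (hb_int_exp x) (hb_tau_int hB x), ← integral_div, ← integral_div,
    ← integral_sub ((hb_two x).1.div_const _) ((hb_four x).div_const _)]
  refine integral_mono (((hb_two x).1.div_const _).sub ((hb_four x).div_const _))
    ((hb_int_exp x).sub (hb_tau_int hB x)) fun t => ?_
  have h := hb_exp_quad (s := t ^ 2 / (2 * B)) (by positivity)
  have e : Real.exp (-t - t ^ 2 / (2 * B)) = Real.exp (-t) * Real.exp (-(t ^ 2 / (2 * B))) := by
    rw [← Real.exp_add]; ring_nf
  have := mul_le_mul_of_nonneg_left h (Real.exp_pos (-t)).le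
  simp only [Pi.sub_apply]
  rw [e]
  have e2 : t ^ 2 * Real.exp (-t) / (2 * B) - t ^ 4 * Real.exp (-t) / (8 * B ^ 2)
    = Real.exp (-t) * (t ^ 2 / (2 * B) - (t ^ 2 / (2 * B)) ^ 2 / 2) := by field_simp; ring
  rw [e2]
  linarith

lemma hb_pdf_integrable :
    Integrable (fun t : ℝ => Real.exp (-t ^ 2 / 2) / Real.sqrt (2 * Real.pi)) := by
  have := (integrable_exp_neg_mul_sq (b := 1 / 2) (by norm_num)).div_const (Real.sqrt (2 * Real.pi))
  refine this.congr (ae_of_all _ fun t => ?_)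
  simp only
  congr 2
  ring

lemma hb_pdf_integral :
    ∫ t : ℝ, Real.exp (-t ^ 2 / 2) / Real.sqrt (2 * Real.pi) = 1 := by
  have h := integral_gaussian (1 / 2)
  have e : (fun t : ℝ => Real.exp (-t ^ 2 / 2)) = fun t => Real.exp (-(1 / 2) * t ^ 2) := by
    ext t; congr 1; ring
  rw [integral_div, e, h]
  have : Real.pi / (1 / 2) = 2 * Real.pi := by ring
  rw [this]
  exact div_self (Real.sqrt_pos.2 (by positivity)).ne'

lemma hb_tail {n : ℝ} {b : ℝ} (hb : 0 < b) (hn : 0 < n)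
    (h : 2 * Real.pi * b ^ 2 * Real.exp (b ^ 2) = n ^ 2) (x : ℝ) :
    stdNormalCDF (b + x / b) = 1 - hbTau (b ^ 2) x / n := by
  have hsplit : stdNormalCDF (b + x / b) +
      ∫ t in Set.Ioi (b + x / b), Real.exp (-t ^ 2 / 2) / Real.sqrt (2 * Real.pi) = 1 := by
    rw [stdNormalCDF, intervalIntegral.integral_Iic_add_Ioi hb_pdf_integrable.integrableOn
      hb_pdf_integrable.integrableOn, hb_pdf_integral]
  have hs : n = Real.sqrt (2 * Real.pi) * b * Real.exp (b ^ 2 / 2) := by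
    have hr : 0 ≤ Real.sqrt (2 * Real.pi) * b * Real.exp (b ^ 2 / 2) := by positivity
    rw [← abs_of_pos hn, ← abs_of_nonneg hr]
    apply (sq_eq_sq_iff_abs_eq_abs _ _).1
    rw [← h, mul_pow, mul_pow, Real.sq_sqrt (by positivity), ← Real.exp_nat_mul]
    congr 2
    push_cast
    ring
  suffices hh : ∫ t in Set.Ioi (b + x / b), Real.exp (-t ^ 2 / 2) / Real.sqrt (2 * Real.pi)
      = hbTau (b ^ 2) x / n by linarith
  set g : ℝ → ℝ := (Set.Ioi (b + x / b)).indicator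
    (fun t => Real.exp (-t ^ 2 / 2) / Real.sqrt (2 * Real.pi)) with hg
  have h1 : ∫ t, g t = ∫ t, g (b + t) := (integral_add_left_eq_self g b).symm
  have h2 : ∫ t, g (b + b⁻¹ * t) = b * ∫ t, g (b + t) := by
    have := Measure.integral_comp_mul_left (fun t => g (b + t)) b⁻¹
    simpa [abs_of_pos hb] using this
  have h3 : ∀ t, g (b + b⁻¹ * t) =
      (Set.Ioi x).indicator (fun t => Real.exp (-t - t ^ 2 / (2 * b ^ 2)) * (b / n)) t := by
    intro t
    have hiff : b + b⁻¹ * t ∈ Set.Ioi (b + x / b) ↔ t ∈ Set.Ioi x := by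
      simp only [Set.mem_Ioi, add_lt_add_iff_left]
      rw [inv_mul_eq_div, div_lt_div_iff_of_pos_right hb]
    rw [hg]
    by_cases ht : t ∈ Set.Ioi x
    · rw [Set.indicator_of_mem (hiff.2 ht), Set.indicator_of_mem ht, hs]
      have : -(b + b⁻¹ * t) ^ 2 / 2 = (-t - t ^ 2 / (2 * b ^ 2)) - b ^ 2 / 2 := by
        field_simp; ring
      rw [this, Real.exp_sub]
      field_simp
    · rw [Set.indicator_of_notMem (fun hc => ht (hiff.1 hc)), Set.indicator_of_notMem ht]
  rw [← integral_indicator measurableSet_Ioi, ← hg, h1]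
  simp_rw [h3] at h2
  rw [integral_indicator measurableSet_Ioi, integral_mul_const] at h2
  rw [hbTau]
  field_simp at h2 ⊢
  linarith

lemma hb_cdf_nonneg (u : ℝ) : 0 ≤ stdNormalCDF u :=
  integral_nonneg fun t => by positivity

lemma hb_pow_le {n : ℕ} {τ : ℝ} (h : τ ≤ n) : (1 - τ / n) ^ n ≤ Real.exp (-τ) :=
  Real.one_sub_div_pow_le_exp_neg h

lemma hb_pow_ge {n : ℕ} (hn : 1 ≤ n) {τ : ℝ} (h0 : 0 ≤ τ) (h : τ ≤ n) :
    Real.exp (-τ) - 2 / n ≤ (1 - τ / n) ^ n := by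
  have hn' : (0 : ℝ) < n := by exact_mod_cast hn
  set s := τ / n with hs
  have hs0 : 0 ≤ s := by positivity
  have hs1 : s ≤ 1 := by rw [hs, div_le_one hn']; exact h
  have h1 : Real.exp (-s) * (1 - s ^ 2) ≤ 1 - s := by
    have := Real.add_one_le_exp s
    have e : Real.exp (-s) * Real.exp s = 1 := by rw [← Real.exp_add]; simp
    have : Real.exp (-s) * (s + 1) ≤ 1 := by
      exact (mul_le_mul_of_nonneg_left this (Real.exp_pos _).le).trans e.le
    nlinarith
  have h2 : (Real.exp (-s) * (1 - s ^ 2)) ^ n ≤ (1 - s) ^ n := by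
    refine pow_le_pow_left₀ ?_ h1 n
    have : 0 ≤ 1 - s ^ 2 := by nlinarith
    positivity
  have h3 : 1 - n * s ^ 2 ≤ (1 - s ^ 2) ^ n := by
    have := one_add_mul_le_pow (a := -s ^ 2) (by nlinarith) n
    have e : 1 + -s ^ 2 = 1 - s ^ 2 := by ring
    rw [e] at this
    linarith
  have h4 : Real.exp (-s) ^ n = Real.exp (-τ) := by
    rw [← Real.exp_nat_mul, hs]; congr 1; field_simp
  rw [mul_pow, h4] at h2
  have h5 : Real.exp (-τ) * (τ ^ 2) ≤ 2 := by
    have := Real.quadratic_le_exp_of_nonneg h0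
    have e : Real.exp (-τ) * Real.exp τ = 1 := by rw [← Real.exp_add]; simp
    have : Real.exp (-τ) * (1 + τ + τ ^ 2 / 2) ≤ 1 := by
      exact (mul_le_mul_of_nonneg_left this (Real.exp_pos _).le).trans e.le
    have := mul_nonneg (Real.exp_pos (-τ)).le h0
    nlinarith [Real.exp_pos (-τ)]
  have h6 : Real.exp (-τ) * (n * s ^ 2) ≤ 2 / n := by
    rw [hs]
    have : Real.exp (-τ) * (n * (τ / n) ^ 2) = Real.exp (-τ) * τ ^ 2 / n := by field_simp
    rw [this]
    gcongr
  have h7 := mul_le_mul_of_nonneg_left h3 (Real.exp_pos (-τ)).le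
  linarith

/-- The limiting profile. -/
noncomputable def hbPsi (x : ℝ) : ℝ :=
  (x ^ 2 + 2 * x + 2) * Real.exp (-Real.exp (-x)) * Real.exp (-x)

lemma hb_Q_pos (x : ℝ) : 0 < x ^ 2 + 2 * x + 2 := by nlinarith [sq_nonneg (x + 1)]

lemma hb_psi_pos (x : ℝ) : 0 < hbPsi x := by
  have := hb_Q_pos x
  unfold hbPsi
  positivity

/-- `w Q ≤ 2 V²` whenever `w ≤ V`, `1 ≤ V`. -/
lemma hb_wQ {x V : ℝ} (hV : 1 ≤ V) (h : Real.exp (-x) ≤ V) :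
    (x ^ 2 + 2 * x + 2) * Real.exp (-x) ≤ 2 * V ^ 2 := by
  rcases le_total 0 x with hx | hx
  · have := Real.quadratic_le_exp_of_nonneg hx
    have e : Real.exp x * Real.exp (-x) = 1 := by rw [← Real.exp_add]; simp
    have : (1 + x + x ^ 2 / 2) * Real.exp (-x) ≤ 1 := by
      exact (mul_le_mul_of_nonneg_right this (Real.exp_pos _).le).trans e.le
    nlinarith
  · have := Real.quadratic_le_exp_of_nonneg (neg_nonneg.2 hx)
    have h1 : x ^ 2 + 2 * x + 2 ≤ 2 * V := by nlinarith
    calc _ ≤ 2 * V * V := mul_le_mul h1 h (Real.exp_pos _).le (by linarith)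
      _ = _ := by ring

lemma hb_psi_bdd : BddAbove (Set.range hbPsi) := by
  refine ⟨4, ?_⟩
  rintro _ ⟨x, rfl⟩
  unfold hbPsi
  set w := Real.exp (-x) with hw
  have hw0 : 0 < w := Real.exp_pos _
  have e : Real.exp (-w) * Real.exp w = 1 := by rw [← Real.exp_add]; simp
  have h1 : Real.exp (-w) * (1 + w + w ^ 2 / 2) ≤ 1 := by
    exact (mul_le_mul_of_nonneg_left (Real.quadratic_le_exp_of_nonneg hw0.le)
      (Real.exp_pos _).le).trans e.le
  have hE := Real.exp_pos (-w)
  rcases le_total w 1 with h | h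
  · have := hb_wQ (x := x) le_rfl h
    have h2 : Real.exp (-w) ≤ 1 := Real.exp_le_one_iff.2 (by linarith)
    rw [← hw] at this
    have h3 := mul_le_mul_of_nonneg_left this hE.le
    nlinarith
  · have := hb_wQ (x := x) h le_rfl
    rw [← hw] at this
    have h3 := mul_le_mul_of_nonneg_left this hE.le
    have := mul_pos hE hw0
    nlinarith

/-- Upper bound near the bulk. -/
lemma hb_bulk {W x : ℝ} (hW : 1 ≤ W) (hx : Real.exp (-x) ≤ W) :
    2 * W ^ 4 * (Real.exp (-hbTau (W ^ 4) x) - Real.exp (-Real.exp (-x)))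
      ≤ (⨆ x, hbPsi x) * Real.exp (1 / W ^ 2) := by
  have hW0 : 0 < W := by linarith
  have hB : 0 < W ^ 4 := by positivity
  set δ := Real.exp (-x) - hbTau (W ^ 4) x with hδ
  have hδ0 : 0 ≤ δ := sub_nonneg.2 (hb_tau_le hB x)
  have hδ1 := hb_delta_le hB x
  rw [← hδ] at hδ1
  have hδ2 : δ ≤ 1 / W ^ 2 := by
    refine hδ1.trans ?_
    rw [div_le_div_iff₀ (by positivity) (by positivity)]
    have := mul_le_mul_of_nonneg_right (hb_wQ hW hx) (by positivity : 0 ≤ W ^ 2)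
    nlinarith
  have e1 : Real.exp (-hbTau (W ^ 4) x) = Real.exp (-Real.exp (-x)) * Real.exp δ := by
    rw [← Real.exp_add]; congr 1; rw [hδ]; ring
  have e2 : Real.exp δ - 1 ≤ δ * Real.exp δ := by
    have := Real.add_one_le_exp (-δ)
    have e : Real.exp (-δ) * Real.exp δ = 1 := by rw [← Real.exp_add]; simp
    have := mul_le_mul_of_nonneg_right this (Real.exp_pos δ).le
    linarith
  have e3 : 2 * W ^ 4 * δ ≤ (x ^ 2 + 2 * x + 2) * Real.exp (-x) := by
    rw [le_div_iff₀ (by positivity)] at hδ1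
    linarith
  calc _ = Real.exp (-Real.exp (-x)) * (2 * W ^ 4 * (Real.exp δ - 1)) := by rw [e1]; ring
    _ ≤ Real.exp (-Real.exp (-x)) * (2 * W ^ 4 * (δ * Real.exp δ)) := by gcongr
    _ = Real.exp (-Real.exp (-x)) * (2 * W ^ 4 * δ) * Real.exp δ := by ring
    _ ≤ Real.exp (-Real.exp (-x)) * ((x ^ 2 + 2 * x + 2) * Real.exp (-x)) * Real.exp δ := by
        gcongr
    _ = hbPsi x * Real.exp δ := by unfold hbPsi; ring
    _ ≤ hbPsi x * Real.exp (1 / W ^ 2) :=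
        mul_le_mul_of_nonneg_left (Real.exp_le_exp.2 hδ2) (hb_psi_pos x).le
    _ ≤ _ := mul_le_mul_of_nonneg_right (le_ciSup hb_psi_bdd x) (Real.exp_pos _).le

lemma hb_upper {W : ℝ} (hW : 1 ≤ W) (x : ℝ) :
    2 * W ^ 4 * (Real.exp (-hbTau (W ^ 4) x) - Real.exp (-Real.exp (-x)))
      ≤ (⨆ x, hbPsi x) * Real.exp (1 / W ^ 2) + 2 * (W ^ 4 * Real.exp (-W)) := by
  have hW0 : 0 < W := by linarith
  have hB : 0 < W ^ 4 := by positivity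
  rcases le_total (Real.exp (-x)) W with h | h
  · have := hb_bulk hW h
    have : 0 < W ^ 4 * Real.exp (-W) := by positivity
    linarith
  · have hy : Real.exp (-(-Real.log W)) = W := by rw [neg_neg, Real.exp_log hW0]
    have h1 := hb_bulk (x := -Real.log W) hW hy.le
    rw [hy] at h1
    have hxy : x ≤ -Real.log W := by
      have := (Real.log_le_log hW0 h)
      rw [Real.log_exp] at this
      linarith
    have h2 := Real.exp_le_exp.2 (neg_le_neg (hb_tau_anti hB hxy))
    have h3 := mul_le_mul_of_nonneg_left h2 (by positivity : 0 ≤ 2 * W ^ 4)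
    have h4 : 0 < 2 * W ^ 4 * Real.exp (-Real.exp (-x)) := by positivity
    linarith

lemma hb_lower {B : ℝ} (hB : 0 < B) (x : ℝ) :
    hbPsi x - Real.exp (-Real.exp (-x)) * (∫ t in Set.Ioi x, t ^ 4 * Real.exp (-t)) / (4 * B)
      ≤ 2 * B * (Real.exp (-hbTau B x) - Real.exp (-Real.exp (-x))) := by
  set δ := Real.exp (-x) - hbTau B x with hδ
  have h := hb_delta_ge hB x
  rw [← hδ] at h
  have e1 : Real.exp (-hbTau B x) = Real.exp (-Real.exp (-x)) * Real.exp δ := by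
    rw [← Real.exp_add]; congr 1; rw [hδ]; ring
  have e2 := Real.add_one_le_exp δ
  rw [e1]
  set I := ∫ t in Set.Ioi x, t ^ 4 * Real.exp (-t)
  calc _ = Real.exp (-Real.exp (-x)) * (2 * B *
        ((x ^ 2 + 2 * x + 2) * Real.exp (-x) / (2 * B) - I / (8 * B ^ 2))) := by
        unfold hbPsi; field_simp; ring
    _ ≤ Real.exp (-Real.exp (-x)) * (2 * B * (Real.exp δ - 1)) := by
        have : (x ^ 2 + 2 * x + 2) * Real.exp (-x) / (2 * B) - I / (8 * B ^ 2)
          ≤ Real.exp δ - 1 := by linarith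
        exact mul_le_mul_of_nonneg_left (mul_le_mul_of_nonneg_left this (by positivity))
          (Real.exp_pos _).le
    _ = _ := by ring

theorem hb_main (b : ℕ → ℝ)
    (hb : ∀ n : ℕ, 1 ≤ n → 0 < b n ∧
      2 * Real.pi * (b n) ^ 2 * Real.exp ((b n) ^ 2) = (n : ℝ) ^ 2) :
    Tendsto (fun n : ℕ =>
        (⨆ x : ℝ, |stdNormalCDF (b n + x / b n) ^ n - Real.exp (-Real.exp (-x))|) /
          ((⨆ x : ℝ, hbPsi x) / (4 * Real.log n)))
      atTop (nhds 1) := by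
  set d := ⨆ x : ℝ, hbPsi x with hd
  have hd0 : 0 < d := (hb_psi_pos 0).trans_le (le_ciSup hb_psi_bdd 0)
  -- growth of `b n ^ 2`
  have hBtop : Tendsto (fun n => b n ^ 2) atTop atTop := by
    rw [tendsto_atTop]
    intro M
    have hn : Tendsto (fun n : ℕ => (n : ℝ) ^ 2) atTop atTop :=
      (tendsto_pow_atTop two_ne_zero).comp tendsto_natCast_atTop_atTop
    filter_upwards [hn.eventually_gt_atTop (2 * Real.pi * |M| * Real.exp |M|),
      eventually_ge_atTop 1] with n h1 h2
    by_contra hlt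
    have hlt : b n ^ 2 ≤ |M| := (not_le.1 hlt).le.trans (le_abs_self M)
    rw [← (hb n h2).2] at h1
    refine absurd h1 (not_lt.2 ?_)
    gcongr
  set W : ℕ → ℝ := fun n => Real.sqrt (b n) with hWdef
  have hW4 : ∀ n, 1 ≤ n → W n ^ 4 = b n ^ 2 := by
    intro n hn
    have := Real.sq_sqrt (hb n hn).1.le
    simp only [hWdef]
    calc Real.sqrt (b n) ^ 4 = (Real.sqrt (b n) ^ 2) ^ 2 := by ring
      _ = _ := by rw [this]
  have hWtop : Tendsto W atTop atTop := by
    have : Tendsto (fun n => Real.sqrt (Real.sqrt (b n ^ 2))) atTop atTop :=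
      Real.tendsto_sqrt_atTop.comp (Real.tendsto_sqrt_atTop.comp hBtop)
    refine this.congr' ?_
    filter_upwards [eventually_ge_atTop 1] with n hn
    rw [Real.sqrt_sq (hb n hn).1.le]
  -- `B / n → 0`
  have hBn : Tendsto (fun n : ℕ => b n ^ 2 / n) atTop (nhds 0) := by
    have h1 : Tendsto (fun n => (b n ^ 2)⁻¹) atTop (nhds 0) := tendsto_inv_atTop_zero.comp hBtop
    refine squeeze_zero' ?_ ?_ h1
    · filter_upwards with n
      positivity
    · filter_upwards [eventually_ge_atTop 1] with n hn
      obtain ⟨hp, he⟩ := hb n hn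
      have hn' : (0 : ℝ) < n := by exact_mod_cast hn
      set B := b n ^ 2 with hB
      have hB0 : 0 < B := by positivity
      rw [div_le_iff₀ hn', ← div_eq_inv_mul, le_div_iff₀ hB0]
      have h3 := Real.pow_div_factorial_le_exp B hB0.le 3
      norm_num [Nat.factorial] at h3
      have hpi := Real.pi_gt_three
      have h4 : (B * B) ^ 2 ≤ (n : ℝ) ^ 2 := by
        rw [← he]
        calc (B * B) ^ 2 = 2 * 3 * B * (B ^ 3 / 6) := by ring
          _ ≤ 2 * Real.pi * B * Real.exp B := by gcongr
      exact (sq_le_sq₀ (by positivity) hn'.le).1 h4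
  -- `2 log n / B → 1`
  have hlog : Tendsto (fun n : ℕ => 4 * Real.log n / (2 * b n ^ 2)) atTop (nhds 1) := by
    have h1 : Tendsto (fun n => Real.log (b n ^ 2) / b n ^ 2) atTop (nhds 0) :=
      Real.isLittleO_log_id_atTop.tendsto_div_nhds_zero.comp hBtop
    have h2 : Tendsto (fun n => Real.log (2 * Real.pi) / b n ^ 2) atTop (nhds 0) :=
      hBtop.const_div_atTop _
    have h3 := ((tendsto_const_nhds (x := (1 : ℝ))).add h1).add h2
    simp only [add_zero] at h3
    refine h3.congr' ?_
    filter_upwards [eventually_ge_atTop 1] with n hn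
    obtain ⟨hp, he⟩ := hb n hn
    have := congrArg Real.log he
    rw [Real.log_mul (by positivity) (by positivity), Real.log_mul (by positivity) (by positivity),
      Real.log_exp, Real.log_pow (x := (n : ℝ))] at this
    push_cast at this
    have e : 4 * Real.log n = 2 * (Real.log (2 * Real.pi) + Real.log (b n ^ 2) + b n ^ 2) := by
      linarith
    rw [e]
    field_simp
    ring
  -- two-sided control
  set S : ℕ → ℝ := fun n =>
    ⨆ x : ℝ, |stdNormalCDF (b n + x / b n) ^ n - Real.exp (-Real.exp (-x))| with hS
  have hF : ∀ n, 1 ≤ n → ∀ x, Real.exp (-hbTau (b n ^ 2) x) - 2 / n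
      ≤ stdNormalCDF (b n + x / b n) ^ n ∧
      stdNormalCDF (b n + x / b n) ^ n ≤ Real.exp (-hbTau (b n ^ 2) x) := by
    intro n hn x
    obtain ⟨hp, he⟩ := hb n hn
    have hn' : (0 : ℝ) < n := by exact_mod_cast hn
    have ht := hb_tail hp hn' he x
    have hle : hbTau (b n ^ 2) x ≤ n := by
      have := hb_cdf_nonneg (b n + x / b n)
      rw [ht, sub_nonneg, div_le_one hn'] at this
      exact this
    rw [ht]
    exact ⟨hb_pow_ge hn (hb_tau_nonneg _ _) hle, hb_pow_le hle⟩
  set U : ℕ → ℝ := fun n => d * Real.exp (1 / W n ^ 2) + 2 * (W n ^ 4 * Real.exp (-W n))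
    + 4 * (b n ^ 2 / n) with hU
  have hup : ∀ n, 1 ≤ n → 1 ≤ W n → ∀ x,
      2 * b n ^ 2 * |stdNormalCDF (b n + x / b n) ^ n - Real.exp (-Real.exp (-x))| ≤ U n := by
    intro n hn hWn x
    obtain ⟨hp, he⟩ := hb n hn
    have hn' : (0 : ℝ) < n := by exact_mod_cast hn
    obtain ⟨f1, f2⟩ := hF n hn x
    have hB : 0 < b n ^ 2 := by positivity
    have hG : Real.exp (-Real.exp (-x)) ≤ Real.exp (-hbTau (b n ^ 2) x) :=
      Real.exp_le_exp.2 (neg_le_neg (hb_tau_le hB x))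
    have hu := hb_upper hWn x
    rw [hW4 n hn] at hu
    have h2n : 0 < 2 / (n : ℝ) := by positivity
    have habs : |stdNormalCDF (b n + x / b n) ^ n - Real.exp (-Real.exp (-x))|
        ≤ (Real.exp (-hbTau (b n ^ 2) x) - Real.exp (-Real.exp (-x))) + 2 / n := by
      rw [abs_le]; constructor <;> linarith
    calc _ ≤ 2 * b n ^ 2 * ((Real.exp (-hbTau (b n ^ 2) x) - Real.exp (-Real.exp (-x))) + 2 / n) :=
          by gcongr
      _ = 2 * b n ^ 2 * (Real.exp (-hbTau (b n ^ 2) x) - Real.exp (-Real.exp (-x)))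
          + 4 * (b n ^ 2 / n) := by ring
      _ ≤ U n := by simp only [hU]; rw [hW4 n hn]; linarith
  have hUlim : Tendsto U atTop (nhds d) := by
    have h1 : Tendsto (fun n => Real.exp (1 / W n ^ 2)) atTop (nhds 1) := by
      have : Tendsto (fun n => 1 / W n ^ 2) atTop (nhds 0) :=
        ((tendsto_pow_atTop two_ne_zero).comp hWtop).const_div_atTop 1
      simpa [Function.comp_def] using (Real.continuous_exp.tendsto 0).comp this
    have h2 : Tendsto (fun n => W n ^ 4 * Real.exp (-W n)) atTop (nhds 0) :=
      (hb_tend 4).comp hWtop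
    have := ((h1.const_mul d).add (h2.const_mul 2)).add (hBn.const_mul 4)
    simpa [hU] using this
  have hSlim : Tendsto (fun n => 2 * b n ^ 2 * S n) atTop (nhds d) := by
    rw [tendsto_order]
    constructor
    · intro a ha
      obtain ⟨x, hx⟩ := exists_lt_of_lt_ciSup ha
      have hlow : Tendsto (fun n : ℕ => hbPsi x - Real.exp (-Real.exp (-x)) *
          (∫ t in Set.Ioi x, t ^ 4 * Real.exp (-t)) / (4 * b n ^ 2) - 4 * (b n ^ 2 / n))
          atTop (nhds (hbPsi x)) := by
        have h1 : Tendsto (fun n : ℕ => Real.exp (-Real.exp (-x)) *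
          (∫ t in Set.Ioi x, t ^ 4 * Real.exp (-t)) / (4 * b n ^ 2)) atTop (nhds 0) :=
          (hBtop.const_mul_atTop (by norm_num : (0 : ℝ) < 4)).const_div_atTop _
        simpa using ((tendsto_const_nhds (x := hbPsi x)).sub h1).sub (hBn.const_mul 4)
      filter_upwards [hlow.eventually_const_lt hx, eventually_ge_atTop 1,
        hWtop.eventually_ge_atTop 1] with n h1 hn hWn
      refine h1.trans_le ?_
      obtain ⟨hp, he⟩ := hb n hn
      have hB : 0 < b n ^ 2 := by positivity
      have hl := hb_lower hB x
      obtain ⟨f1, f2⟩ := hF n hn x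
      have hbdd : BddAbove (Set.range fun x : ℝ =>
          |stdNormalCDF (b n + x / b n) ^ n - Real.exp (-Real.exp (-x))|) := by
        refine ⟨U n / (2 * b n ^ 2), ?_⟩
        rintro _ ⟨y, rfl⟩
        rw [le_div_iff₀ (by positivity)]
        have := hup n hn hWn y
        simp only
        linarith
      have h3 := (le_abs_self _).trans (le_ciSup hbdd x)
      have h4 : Real.exp (-hbTau (b n ^ 2) x) - Real.exp (-Real.exp (-x)) - 2 / n ≤ S n := by
        simp only [hS]
        linarith
      have h5 := mul_le_mul_of_nonneg_left h4 (by positivity : 0 ≤ 2 * b n ^ 2)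
      have e : 2 * b n ^ 2 * (Real.exp (-hbTau (b n ^ 2) x) - Real.exp (-Real.exp (-x)) - 2 / n)
        = 2 * b n ^ 2 * (Real.exp (-hbTau (b n ^ 2) x) - Real.exp (-Real.exp (-x)))
          - 4 * (b n ^ 2 / n) := by ring
      rw [e] at h5
      linarith
    · intro a ha
      filter_upwards [hUlim.eventually_lt_const ha, eventually_ge_atTop 1,
        hWtop.eventually_ge_atTop 1] with n h1 hn hWn
      refine lt_of_le_of_lt ?_ h1
      obtain ⟨hp, he⟩ := hb n hn
      have : S n ≤ U n / (2 * b n ^ 2) := by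
        refine ciSup_le fun y => ?_
        rw [le_div_iff₀ (by positivity)]
        have := hup n hn hWn y
        linarith
      rw [le_div_iff₀ (by positivity)] at this
      linarith
  have hfin := (hSlim.div_const d).mul hlog
  rw [div_self hd0.ne', one_mul] at hfin
  refine hfin.congr' ?_
  filter_upwards [eventually_ge_atTop 1] with n hn
  obtain ⟨hp, he⟩ := hb n hn
  simp only [hS]
  field_simp

/-- Hall's Berry–Esseen bound made precise: if `b_n > 0` solves
`2π b_n² exp(b_n²) = n²`, then
`sup_x |P(X_{(n)} ≤ b_n + x/b_n) - exp(-e^{-x})| = (d₁/(4 log n)) (1 + o(1))`,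
where `d₁ = sup_x (x² + 2x + 2) exp(-e^{-x}) e^{-x}`. -/
theorem hall_berryEsseen (b : ℕ → ℝ)
    (hb : ∀ n : ℕ, 1 ≤ n → 0 < b n ∧
      2 * Real.pi * (b n) ^ 2 * Real.exp ((b n) ^ 2) = (n : ℝ) ^ 2) :
    Tendsto (fun n : ℕ =>
        (⨆ x : ℝ, |stdNormalCDF (b n + x / b n) ^ n - Real.exp (-Real.exp (-x))|) /
          ((⨆ x : ℝ, (x ^ 2 + 2 * x + 2) * Real.exp (-Real.exp (-x)) * Real.exp (-x)) /
            (4 * Real.log n)))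
      atTop (nhds 1) := by
  exact hb_main b hb
end
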